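/- There exists a constant C > 0 such that for every T > 0 and every smooth solution u of the 1-dimensional Schrödinger flow with Neumann boundary conditions on [0,T], for all t ∈ [0,T]: ∫₀¹ |∂_t∂_x²u(x,t)|² dx ≤ C ‖∂_t²u(·,t)‖²_{L²} + C ( ‖u(·,t)‖²_{H²} + 1 )² ‖∂_t u(·,t)‖²_{H¹}. -/

import Mathlib

open MeasureTheory Set

noncomputable section

abbrev E3 := EuclideanSpace ℝ (Fin 3)

/-- The cross product on `EuclideanSpace ℝ (Fin 3)`. -/
def cross3 (a b : E3) : E3 :=
  (WithLp.equiv 2 (Fin 3 → ℝ)).symm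
    (crossProduct ((WithLp.equiv 2 (Fin 3 → ℝ)) a) ((WithLp.equiv 2 (Fin 3 → ℝ)) b))

/-- Partial derivative in the space variable of `u = u x t`. -/
def pdx (u : ℝ → ℝ → E3) : ℝ → ℝ → E3 := fun x t => deriv (fun y => u y t) x

/-- Partial derivative in the time variable of `u = u x t`. -/
def pdt (u : ℝ → ℝ → E3) : ℝ → ℝ → E3 := fun x t => deriv (fun s => u x s) t

/-- `u` is a smooth solution of the 1-dimensional Schrödinger flow with Neumann
boundary conditions on `[0,1] × [0,T]`. -/
def IsSol (T : ℝ) (u : ℝ → ℝ → E3) : Prop :=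
  ContDiff ℝ (⊤ : ℕ∞) (fun p : ℝ × ℝ => u p.1 p.2) ∧
  (∀ x ∈ Icc (0:ℝ) 1, ∀ t ∈ Icc (0:ℝ) T, ‖u x t‖ = 1) ∧
  (∀ x ∈ Icc (0:ℝ) 1, ∀ t ∈ Icc (0:ℝ) T, pdt u x t = cross3 (u x t) (pdx (pdx u) x t)) ∧
  (∀ t ∈ Icc (0:ℝ) T, pdx u 0 t = 0 ∧ pdx u 1 t = 0)

/-- Squared `L²` norm on `[0,1]`. -/
def L2sq (f : ℝ → E3) : ℝ := ∫ x in (0:ℝ)..1, ‖f x‖ ^ 2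

/-- Squared `H^k` Sobolev norm on `[0,1]`. -/
def Hsq (k : ℕ) (f : ℝ → E3) : ℝ :=
  ∑ j ∈ Finset.range (k + 1), ∫ x in (0:ℝ)..1, ‖deriv^[j] f x‖ ^ 2

/-!
Write `|w|² = |u × w|² + ⟨u, w⟩²` for `w = ∂_t∂_x²u`, since `|u| = 1`. Differentiating the equation
in time gives `u × w = ∂_t²u - ∂_t u × ∂_x²u`; differentiating `|u|² = 1` twice in space and once in
time gives `⟨u, w⟩ = -⟨∂_t u, ∂_x²u⟩ - 2 ⟨∂_x u, ∂_t∂_x u⟩`. The quadratic terms are then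
controlled by the embedding `H¹ ⊂ L^∞` applied to `∂_t u` and `∂_x u`.
-/

lemma hasDerivAt_eq_of_eqOn {𝕜 F : Type*} [NontriviallyNormedField 𝕜] [NormedAddCommGroup F]
    [NormedSpace 𝕜 F] {f g : 𝕜 → F} {f' g' : F} {s : Set 𝕜} {x : 𝕜}
    (hs : UniqueDiffWithinAt 𝕜 s x) (hx : x ∈ s) (hf : HasDerivAt f f' x)
    (hg : HasDerivAt g g' x) (hfg : EqOn f g s) : f' = g' :=
  hs.eq_deriv s hf.hasDerivWithinAt (hg.hasDerivWithinAt.congr hfg (hfg hx))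

section InnerProductSpace

variable {E : Type*} [NormedAddCommGroup E] [InnerProductSpace ℝ E]

lemma norm_sub_sq_le (v w : E) : ‖v - w‖ ^ 2 ≤ 2 * ‖v‖ ^ 2 + 2 * ‖w‖ ^ 2 := by
  have := parallelogram_law_with_norm ℝ v w
  nlinarith [sq_nonneg ‖v + w‖]

lemma norm_sq_sub_norm_sq_le_integral {f f' : ℝ → E} {a b x y : ℝ}
    (hf : ∀ z ∈ Icc a b, HasDerivAt f (f' z) z) (hf' : ContinuousOn f' (Icc a b))
    (hx : x ∈ Icc a b) (hy : y ∈ Icc a b) :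
    ‖f x‖ ^ 2 - ‖f y‖ ^ 2 ≤ ∫ z in a..b, (‖f z‖ ^ 2 + ‖f' z‖ ^ 2) := by
  have hab : a ≤ b := hx.1.trans hx.2
  have hfc : ContinuousOn f (Icc a b) := fun z hz => (hf z hz).continuousAt.continuousWithinAt
  have hsub : uIcc y x ⊆ Icc a b := ordConnected_Icc.uIcc_subset hy hx
  have hgc : ContinuousOn (fun z => ‖f z‖ ^ 2 + ‖f' z‖ ^ 2) (Icc a b) := by fun_prop
  have hbound (z : ℝ) : ‖2 * inner ℝ (f z) (f' z)‖ ≤ ‖f z‖ ^ 2 + ‖f' z‖ ^ 2 := by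
    rw [norm_mul, Real.norm_two]
    nlinarith [norm_inner_le_norm (𝕜 := ℝ) (f z) (f' z), sq_nonneg (‖f z‖ - ‖f' z‖)]
  calc ‖f x‖ ^ 2 - ‖f y‖ ^ 2 = ∫ z in y..x, 2 * inner ℝ (f z) (f' z) := by
        refine (intervalIntegral.integral_eq_sub_of_hasDerivAt
          (fun z hz => (hf z (hsub hz)).norm_sq) ?_).symm
        exact (continuousOn_const.mul ((hfc.mono hsub).inner (hf'.mono hsub))).intervalIntegrable
    _ ≤ ‖∫ z in y..x, 2 * inner ℝ (f z) (f' z)‖ := Real.le_norm_self _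
    _ ≤ |∫ z in y..x, (‖f z‖ ^ 2 + ‖f' z‖ ^ 2)| :=
        intervalIntegral.norm_integral_le_abs_of_norm_le (.of_forall hbound)
          (hgc.mono hsub).intervalIntegrable
    _ ≤ |∫ z in a..b, (‖f z‖ ^ 2 + ‖f' z‖ ^ 2)| := by
        refine intervalIntegral.abs_integral_mono_interval ?_ (.of_forall fun z => by positivity)
          (hgc.intervalIntegrable_of_Icc hab)
        rw [uIoc_of_le hab]
        exact Ioc_subset_Ioc (le_min hy.1 hx.1) (max_le hy.2 hx.2)
    _ = ∫ z in a..b, (‖f z‖ ^ 2 + ‖f' z‖ ^ 2) :=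
        abs_of_nonneg (intervalIntegral.integral_nonneg hab fun z _ => by positivity)

lemma norm_sq_le_integral_norm_sq_add {f f' : ℝ → E} {a b x : ℝ} (hab : a < b)
    (hf : ∀ z ∈ Icc a b, HasDerivAt f (f' z) z) (hf' : ContinuousOn f' (Icc a b))
    (hx : x ∈ Icc a b) :
    ‖f x‖ ^ 2 ≤ (1 + (b - a)⁻¹) * (∫ z in a..b, ‖f z‖ ^ 2) + ∫ z in a..b, ‖f' z‖ ^ 2 := by
  have hfc : ContinuousOn f (Icc a b) := fun z hz => (hf z hz).continuousAt.continuousWithinAt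
  have hf_int : IntervalIntegrable (fun z => ‖f z‖ ^ 2) volume a b :=
    (hfc.norm.pow 2).intervalIntegrable_of_Icc hab.le
  have hf'_int : IntervalIntegrable (fun z => ‖f' z‖ ^ 2) volume a b :=
    (hf'.norm.pow 2).intervalIntegrable_of_Icc hab.le
  set N := ∫ z in a..b, (‖f z‖ ^ 2 + ‖f' z‖ ^ 2) with hN
  have haverage : (b - a) * ‖f x‖ ^ 2 ≤ (∫ z in a..b, ‖f z‖ ^ 2) + (b - a) * N := by
    calc (b - a) * ‖f x‖ ^ 2 = ∫ _ in a..b, ‖f x‖ ^ 2 := by simp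
      _ ≤ ∫ y in a..b, (‖f y‖ ^ 2 + N) :=
          intervalIntegral.integral_mono_on hab.le (by simp) (hf_int.add (by simp)) fun y hy =>
            sub_le_iff_le_add'.1 (norm_sq_sub_norm_sq_le_integral hf hf' hx hy)
      _ = (∫ z in a..b, ‖f z‖ ^ 2) + (b - a) * N := by
          rw [intervalIntegral.integral_add hf_int (by simp)]; simp
  rw [intervalIntegral.integral_add hf_int hf'_int] at hN
  have hlen : 0 < b - a := sub_pos.2 hab
  refine le_of_mul_le_mul_left (haverage.trans_eq ?_) hlen
  rw [hN]
  field_simp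
  ring

lemma inner_deriv_eq_zero_of_norm_eqOn {f : ℝ → E} {f' : E} {s : Set ℝ} {x r : ℝ}
    (hs : UniqueDiffWithinAt ℝ s x) (hx : x ∈ s) (hf : HasDerivAt f f' x)
    (hr : ∀ y ∈ s, ‖f y‖ = r) : inner ℝ (f x) f' = 0 := by
  have h : 2 * inner ℝ (f x) f' = 0 :=
    hasDerivAt_eq_of_eqOn hs hx hf.norm_sq (hasDerivAt_const x (r ^ 2)) fun y hy => by
      simp only [hr y hy]
  linarith

lemma inner_deriv_deriv_of_norm_eqOn {f f' : ℝ → E} {f'' : E} {s : Set ℝ} {x r : ℝ}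
    (hs : UniqueDiffOn ℝ s) (hx : x ∈ s) (hf : ∀ y ∈ s, HasDerivAt f (f' y) y)
    (hf' : HasDerivAt f' f'' x) (hr : ∀ y ∈ s, ‖f y‖ = r) :
    inner ℝ (f x) f'' = -‖f' x‖ ^ 2 := by
  have h : inner ℝ (f x) f'' + inner ℝ (f' x) (f' x) = 0 :=
    hasDerivAt_eq_of_eqOn (hs x hx) hx ((hf x hx).inner ℝ hf') (hasDerivAt_const x 0)
      fun y hy => inner_deriv_eq_zero_of_norm_eqOn (hs y hy) hy (hf y hy) hr
  rw [real_inner_self_eq_norm_sq] at h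
  linarith

end InnerProductSpace

lemma isBilinearMap_cross3 : IsBilinearMap ℝ cross3 where
  add_left a b c := by simp [cross3]
  smul_left r a b := by simp [cross3]
  add_right a b c := by simp [cross3]
  smul_right r a b := by simp [cross3]

lemma hasDerivAt_cross3 {f g : ℝ → E3} {f' g' : E3} {t : ℝ}
    (hf : HasDerivAt f f' t) (hg : HasDerivAt g g' t) :
    HasDerivAt (fun s => cross3 (f s) (g s)) (cross3 (f t) g' + cross3 f' (g t)) t :=
  isBilinearMap_cross3.toContinuousBilinearMap.hasDerivAt_of_bilinear (fun _ => hf) fun _ => hg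

lemma norm_cross3_sq_add_inner_sq (a b : E3) :
    ‖cross3 a b‖ ^ 2 + inner ℝ a b ^ 2 = ‖a‖ ^ 2 * ‖b‖ ^ 2 := by
  simp only [← real_inner_self_eq_norm_sq, EuclideanSpace.inner_eq_star_dotProduct, cross3,
    star_trivial]
  simp only [WithLp.equiv_apply, WithLp.equiv_symm_apply, cross_dot_cross, dotProduct_comm]
  ring

section Slices

variable {F : Type*} [NormedAddCommGroup F] [NormedSpace ℝ F] {u : ℝ → ℝ → F} {x t : ℝ}

lemma hasDerivAt_fderiv_fst (hu : DifferentiableAt ℝ (Function.uncurry u) (x, t)) :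
    HasDerivAt (fun y => u y t) (fderiv ℝ (Function.uncurry u) (x, t) (1, 0)) x :=
  HasFDerivAt.comp_hasDerivAt (l := Function.uncurry u) x hu.hasFDerivAt
    ((hasDerivAt_id x).prodMk (hasDerivAt_const x t))

lemma hasDerivAt_fderiv_snd (hu : DifferentiableAt ℝ (Function.uncurry u) (x, t)) :
    HasDerivAt (fun s => u x s) (fderiv ℝ (Function.uncurry u) (x, t) (0, 1)) t :=
  HasFDerivAt.comp_hasDerivAt (l := Function.uncurry u) t hu.hasFDerivAt
    ((hasDerivAt_const t x).prodMk (hasDerivAt_id t))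

lemma contDiff_slice {n : WithTop ℕ∞} (hu : ContDiff ℝ n (Function.uncurry u)) (t : ℝ) :
    ContDiff ℝ n (fun x => u x t) :=
  hu.comp (contDiff_prodMk_left t)

end Slices

section PartialDerivatives

variable {u : ℝ → ℝ → E3} {x t : ℝ}

lemma hasDerivAt_pdx (hu : DifferentiableAt ℝ (Function.uncurry u) (x, t)) :
    HasDerivAt (fun y => u y t) (pdx u x t) x :=
  (hasDerivAt_fderiv_fst hu).differentiableAt.hasDerivAt

lemma hasDerivAt_pdt (hu : DifferentiableAt ℝ (Function.uncurry u) (x, t)) :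
    HasDerivAt (fun s => u x s) (pdt u x t) t :=
  (hasDerivAt_fderiv_snd hu).differentiableAt.hasDerivAt

lemma uncurry_pdx (hu : Differentiable ℝ (Function.uncurry u)) :
    Function.uncurry (pdx u) = fun p => fderiv ℝ (Function.uncurry u) p (1, 0) :=
  funext fun p => (hasDerivAt_fderiv_fst (hu p)).deriv

lemma uncurry_pdt (hu : Differentiable ℝ (Function.uncurry u)) :
    Function.uncurry (pdt u) = fun p => fderiv ℝ (Function.uncurry u) p (0, 1) :=
  funext fun p => (hasDerivAt_fderiv_snd (hu p)).deriv

lemma contDiff_uncurry_pdx {m n : WithTop ℕ∞} (hu : ContDiff ℝ n (Function.uncurry u))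
    (hmn : m + 1 ≤ n) : ContDiff ℝ m (Function.uncurry (pdx u)) := by
  rw [uncurry_pdx (hu.differentiable (by rintro rfl; simp at hmn))]
  exact (hu.fderiv_right hmn).clm_apply contDiff_const

lemma contDiff_uncurry_pdt {m n : WithTop ℕ∞} (hu : ContDiff ℝ n (Function.uncurry u))
    (hmn : m + 1 ≤ n) : ContDiff ℝ m (Function.uncurry (pdt u)) := by
  rw [uncurry_pdt (hu.differentiable (by rintro rfl; simp at hmn))]
  exact (hu.fderiv_right hmn).clm_apply contDiff_const

lemma pdt_pdx_comm (hu : ContDiff ℝ 2 (Function.uncurry u)) : pdt (pdx u) = pdx (pdt u) := by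
  have hd : Differentiable ℝ (Function.uncurry u) := hu.differentiable two_ne_zero
  have hfd : Differentiable ℝ (fderiv ℝ (Function.uncurry u)) :=
    (hu.fderiv_right (m := 1) (by norm_num)).differentiable one_ne_zero
  have hdx : Differentiable ℝ (Function.uncurry (pdx u)) :=
    (contDiff_uncurry_pdx (m := 1) hu (by norm_num)).differentiable one_ne_zero
  have hdt : Differentiable ℝ (Function.uncurry (pdt u)) :=
    (contDiff_uncurry_pdt (m := 1) hu (by norm_num)).differentiable one_ne_zero
  have hsnd (p v w : ℝ × ℝ) : fderiv ℝ (fun q => fderiv ℝ (Function.uncurry u) q v) p w =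
      fderiv ℝ (fderiv ℝ (Function.uncurry u)) p w v := by
    simp [fderiv_clm_apply (hfd p) (differentiableAt_const v)]
  have hsymm (p : ℝ × ℝ) : IsSymmSndFDerivAt ℝ (Function.uncurry u) p :=
    hu.contDiffAt.isSymmSndFDerivAt (by simp)
  apply Function.uncurry_injective
  rw [uncurry_pdt hdx, uncurry_pdx hdt, uncurry_pdx hd, uncurry_pdt hd]
  funext p
  rw [hsnd, hsnd, hsymm p]

end PartialDerivatives

section SobolevNorms

lemma L2sq_nonneg (f : ℝ → E3) : 0 ≤ L2sq f :=
  intervalIntegral.integral_nonneg zero_le_one fun _ _ => by positivity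

lemma Hsq_nonneg (k : ℕ) (f : ℝ → E3) : 0 ≤ Hsq k f :=
  Finset.sum_nonneg fun j _ => L2sq_nonneg (deriv^[j] f)

lemma L2sq_iterate_deriv_le_Hsq {j k : ℕ} (hjk : j ≤ k) (f : ℝ → E3) :
    L2sq (deriv^[j] f) ≤ Hsq k f :=
  Finset.single_le_sum (fun i _ => L2sq_nonneg (deriv^[i] f))
    (Finset.mem_range.2 (Nat.lt_succ_of_le hjk))

lemma Hsq_deriv_le_Hsq_succ (k : ℕ) (f : ℝ → E3) : Hsq k (deriv f) ≤ Hsq (k + 1) f := by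
  rw [Hsq, Hsq, Finset.sum_range_succ' _ (k + 1)]
  exact le_add_of_nonneg_right (L2sq_nonneg f)

lemma Hsq_one (f : ℝ → E3) : Hsq 1 f = L2sq f + L2sq (deriv f) := by
  simp [Hsq, L2sq, Finset.sum_range_succ]

lemma norm_sq_le_two_mul_Hsq_one {f : ℝ → E3} (hf : ContDiff ℝ 1 f) {x : ℝ}
    (hx : x ∈ Icc (0 : ℝ) 1) : ‖f x‖ ^ 2 ≤ 2 * Hsq 1 f := by
  have hsup : ‖f x‖ ^ 2 ≤ (1 + (1 - 0)⁻¹) * L2sq f + L2sq (deriv f) :=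
    norm_sq_le_integral_norm_sq_add zero_lt_one
      (fun z _ => (hf.differentiable one_ne_zero z).hasDerivAt)
      (hf.continuous_deriv le_rfl).continuousOn hx
  rw [Hsq_one]
  linarith [L2sq_nonneg (deriv f)]

end SobolevNorms

section SchrodingerFlow

variable {u : ℝ → ℝ → E3} {I J : Set ℝ} {x t : ℝ}

lemma pdt_pdt_of_schrodinger_flow (hu : ContDiff ℝ 3 (Function.uncurry u))
    (hJ : UniqueDiffWithinAt ℝ J t) (ht : t ∈ J)
    (hflow : ∀ s ∈ J, pdt u x s = cross3 (u x s) (pdx (pdx u) x s)) :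
    pdt (pdt u) x t =
      cross3 (u x t) (pdt (pdx (pdx u)) x t) + cross3 (pdt u x t) (pdx (pdx u) x t) := by
  have hut : ContDiff ℝ 2 (Function.uncurry (pdt u)) := contDiff_uncurry_pdt hu (by norm_num)
  have hux : ContDiff ℝ 2 (Function.uncurry (pdx u)) := contDiff_uncurry_pdx hu (by norm_num)
  have huxx : ContDiff ℝ 1 (Function.uncurry (pdx (pdx u))) :=
    contDiff_uncurry_pdx hux (by norm_num)
  exact hasDerivAt_eq_of_eqOn hJ ht (hasDerivAt_pdt (hut.differentiable two_ne_zero _))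
    (hasDerivAt_cross3 (hasDerivAt_pdt (hu.differentiable three_ne_zero _))
      (hasDerivAt_pdt (huxx.differentiable one_ne_zero _))) hflow

lemma inner_pdt_pdx_pdx_of_norm_eq (hu : ContDiff ℝ 3 (Function.uncurry u))
    (hI : UniqueDiffOn ℝ I) (hJ : UniqueDiffWithinAt ℝ J t) (hx : x ∈ I) (ht : t ∈ J) {r : ℝ}
    (hnorm : ∀ y ∈ I, ∀ s ∈ J, ‖u y s‖ = r) :
    inner ℝ (u x t) (pdt (pdx (pdx u)) x t) =
      -(inner ℝ (pdt u x t) (pdx (pdx u) x t) + 2 * inner ℝ (pdx u x t) (pdx (pdt u) x t)) := by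
  have hux : ContDiff ℝ 2 (Function.uncurry (pdx u)) := contDiff_uncurry_pdx hu (by norm_num)
  have huxx : ContDiff ℝ 1 (Function.uncurry (pdx (pdx u))) :=
    contDiff_uncurry_pdx hux (by norm_num)
  have hud := hu.differentiable three_ne_zero
  have huxd := hux.differentiable two_ne_zero
  have huxxd := huxx.differentiable one_ne_zero
  have htangent : ∀ s ∈ J, inner ℝ (u x s) (pdx (pdx u) x s) = -‖pdx u x s‖ ^ 2 := fun s hs =>
    inner_deriv_deriv_of_norm_eqOn (f := fun y => u y s) (f' := fun y => pdx u y s) hI hx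
      (fun y _ => hasDerivAt_pdx (hud (y, s))) (hasDerivAt_pdx (huxd (x, s)))
      fun y hy => hnorm y hy s hs
  have hderiv := hasDerivAt_eq_of_eqOn hJ ht
    ((hasDerivAt_pdt (hud (x, t))).inner ℝ (hasDerivAt_pdt (huxxd (x, t))))
    (hasDerivAt_pdt (huxd (x, t))).norm_sq.neg htangent
  rw [← pdt_pdx_comm (hu.of_le (by norm_num))]
  linarith

lemma norm_pdt_pdx_pdx_sq_le (hu : ContDiff ℝ 3 (Function.uncurry u)) (hI : UniqueDiffOn ℝ I)
    (hJ : UniqueDiffWithinAt ℝ J t) (hx : x ∈ I) (ht : t ∈ J)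
    (hnorm : ∀ y ∈ I, ∀ s ∈ J, ‖u y s‖ = 1)
    (hflow : ∀ s ∈ J, pdt u x s = cross3 (u x s) (pdx (pdx u) x s)) :
    ‖pdt (pdx (pdx u)) x t‖ ^ 2 ≤ 2 * ‖pdt (pdt u) x t‖ ^ 2 +
      2 * (‖pdt u x t‖ ^ 2 * ‖pdx (pdx u) x t‖ ^ 2) +
      8 * (‖pdx u x t‖ ^ 2 * ‖pdx (pdt u) x t‖ ^ 2) := by
  set w := pdt (pdx (pdx u)) x t
  set a := inner ℝ (pdt u x t) (pdx (pdx u) x t)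
  set b := inner ℝ (pdx u x t) (pdx (pdt u) x t)
  set c := cross3 (pdt u x t) (pdx (pdx u) x t)
  have hcross : ‖cross3 (u x t) w‖ ^ 2 ≤ 2 * ‖pdt (pdt u) x t‖ ^ 2 + 2 * ‖c‖ ^ 2 := by
    rw [eq_sub_of_add_eq (pdt_pdt_of_schrodinger_flow hu hJ ht hflow).symm]
    exact norm_sub_sq_le _ _
  have hinner : inner ℝ (u x t) w ^ 2 ≤ 2 * a ^ 2 + 8 * b ^ 2 := by
    rw [inner_pdt_pdx_pdx_of_norm_eq hu hI hJ hx ht hnorm]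
    linarith [sq_nonneg (a - 2 * b)]
  have hb : b ^ 2 ≤ ‖pdx u x t‖ ^ 2 * ‖pdx (pdt u) x t‖ ^ 2 := by
    rw [← norm_cross3_sq_add_inner_sq]
    exact le_add_of_nonneg_left (sq_nonneg _)
  calc ‖w‖ ^ 2 = ‖cross3 (u x t) w‖ ^ 2 + inner ℝ (u x t) w ^ 2 := by
        rw [norm_cross3_sq_add_inner_sq, hnorm x hx t ht, one_pow, one_mul]
    _ ≤ 2 * ‖pdt (pdt u) x t‖ ^ 2 + 2 * (‖c‖ ^ 2 + a ^ 2) + 8 * b ^ 2 := by linarith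
    _ ≤ _ := by
        rw [norm_cross3_sq_add_inner_sq]
        gcongr

lemma norm_pdt_pdx_pdx_sq_le_Hsq (hu : ContDiff ℝ 3 (Function.uncurry u))
    (hJ : UniqueDiffWithinAt ℝ J t) (hx : x ∈ Icc (0 : ℝ) 1) (ht : t ∈ J)
    (hnorm : ∀ y ∈ Icc (0 : ℝ) 1, ∀ s ∈ J, ‖u y s‖ = 1)
    (hflow : ∀ s ∈ J, pdt u x s = cross3 (u x s) (pdx (pdx u) x s)) :
    ‖pdt (pdx (pdx u)) x t‖ ^ 2 ≤ 2 * ‖pdt (pdt u) x t‖ ^ 2 +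
      4 * Hsq 1 (fun y => pdt u y t) * ‖pdx (pdx u) x t‖ ^ 2 +
      16 * Hsq 2 (fun y => u y t) * ‖pdx (pdt u) x t‖ ^ 2 := by
  have hut : ContDiff ℝ 1 (Function.uncurry (pdt u)) := contDiff_uncurry_pdt hu (by norm_num)
  have hux : ContDiff ℝ 1 (Function.uncurry (pdx u)) := contDiff_uncurry_pdx hu (by norm_num)
  have hut_sup : ‖pdt u x t‖ ^ 2 ≤ 2 * Hsq 1 (fun y => pdt u y t) :=
    norm_sq_le_two_mul_Hsq_one (contDiff_slice hut t) hx
  have hux_sup : ‖pdx u x t‖ ^ 2 ≤ 2 * Hsq 2 (fun y => u y t) :=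
    (norm_sq_le_two_mul_Hsq_one (contDiff_slice hux t) hx).trans <|
      mul_le_mul_of_nonneg_left (Hsq_deriv_le_Hsq_succ 1 fun y => u y t) zero_le_two
  calc _ ≤ 2 * ‖pdt (pdt u) x t‖ ^ 2 + 2 * (‖pdt u x t‖ ^ 2 * ‖pdx (pdx u) x t‖ ^ 2) +
        8 * (‖pdx u x t‖ ^ 2 * ‖pdx (pdt u) x t‖ ^ 2) :=
        norm_pdt_pdx_pdx_sq_le hu (uniqueDiffOn_Icc zero_lt_one) hJ hx ht hnorm hflow
    _ ≤ 2 * ‖pdt (pdt u) x t‖ ^ 2 +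
        2 * (2 * Hsq 1 (fun y => pdt u y t) * ‖pdx (pdx u) x t‖ ^ 2) +
        8 * (2 * Hsq 2 (fun y => u y t) * ‖pdx (pdt u) x t‖ ^ 2) := by gcongr
    _ = _ := by ring

end SchrodingerFlow

theorem utxx_estimate_schrodinger_flow_general {J : Set ℝ} {t : ℝ}
    (hJ : UniqueDiffWithinAt ℝ J t) (ht : t ∈ J) {u : ℝ → ℝ → E3}
    (hu : ContDiff ℝ 3 (Function.uncurry u))
    (hnorm : ∀ x ∈ Icc (0 : ℝ) 1, ∀ s ∈ J, ‖u x s‖ = 1)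
    (hflow : ∀ x ∈ Icc (0 : ℝ) 1, ∀ s ∈ J, pdt u x s = cross3 (u x s) (pdx (pdx u) x s)) :
    (∫ x in (0 : ℝ)..1, ‖pdt (pdx (pdx u)) x t‖ ^ 2) ≤
      2 * L2sq (fun x => pdt (pdt u) x t) +
        20 * Hsq 2 (fun x => u x t) * Hsq 1 (fun x => pdt u x t) := by
  set A := Hsq 2 (fun x => u x t)
  set B := Hsq 1 (fun x => pdt u x t)
  have hut : ContDiff ℝ 2 (Function.uncurry (pdt u)) := contDiff_uncurry_pdt hu (by norm_num)
  have hux : ContDiff ℝ 2 (Function.uncurry (pdx u)) := contDiff_uncurry_pdx hu (by norm_num)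
  have huxx : ContDiff ℝ 1 (Function.uncurry (pdx (pdx u))) :=
    contDiff_uncurry_pdx hux (by norm_num)
  have hint {v : ℝ → ℝ → E3} (hv : ContDiff ℝ 0 (Function.uncurry v)) :
      IntervalIntegrable (fun x => ‖v x t‖ ^ 2) volume 0 1 :=
    ((contDiff_slice hv t).continuous.norm.pow 2).intervalIntegrable 0 1
  have hutt_int := (hint (contDiff_uncurry_pdt hut (by norm_num))).const_mul 2
  have huxx_int := (hint (huxx.of_le zero_le_one)).const_mul (4 * B)
  have hutx_int := (hint (contDiff_uncurry_pdx hut (by norm_num))).const_mul (16 * A)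
  have hA : 0 ≤ A := Hsq_nonneg 2 _
  have hB : 0 ≤ B := Hsq_nonneg 1 _
  have huxx_le : L2sq (fun x => pdx (pdx u) x t) ≤ A :=
    L2sq_iterate_deriv_le_Hsq (j := 2) le_rfl fun x => u x t
  have hutx_le : L2sq (fun x => pdx (pdt u) x t) ≤ B :=
    L2sq_iterate_deriv_le_Hsq (j := 1) le_rfl fun x => pdt u x t
  calc (∫ x in (0 : ℝ)..1, ‖pdt (pdx (pdx u)) x t‖ ^ 2)
      ≤ ∫ x in (0 : ℝ)..1, (2 * ‖pdt (pdt u) x t‖ ^ 2 + 4 * B * ‖pdx (pdx u) x t‖ ^ 2 +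
          16 * A * ‖pdx (pdt u) x t‖ ^ 2) :=
        intervalIntegral.integral_mono_on zero_le_one
          (hint (contDiff_uncurry_pdt huxx (by norm_num)))
          ((hutt_int.add huxx_int).add hutx_int) fun x hx =>
            norm_pdt_pdx_pdx_sq_le_Hsq hu hJ hx ht hnorm (hflow x hx)
    _ = 2 * L2sq (fun x => pdt (pdt u) x t) + 4 * B * L2sq (fun x => pdx (pdx u) x t) +
          16 * A * L2sq (fun x => pdx (pdt u) x t) := by
        simp only [intervalIntegral.integral_add (hutt_int.add huxx_int) hutx_int,
          intervalIntegral.integral_add hutt_int huxx_int,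
          intervalIntegral.integral_const_mul, L2sq]
    _ ≤ 2 * L2sq (fun x => pdt (pdt u) x t) + 4 * B * A + 16 * A * B := by gcongr
    _ = 2 * L2sq (fun x => pdt (pdt u) x t) + 20 * A * B := by ring

theorem utxx_estimate_schrodinger_flow :
    ∃ C > (0:ℝ), ∀ T > (0:ℝ), ∀ u : ℝ → ℝ → E3, IsSol T u →
      ∀ t ∈ Icc (0:ℝ) T,
        (∫ x in (0:ℝ)..1, ‖pdt (pdx (pdx u)) x t‖ ^ 2)
          ≤ C * L2sq (fun x => pdt (pdt u) x t)
            + C * (Hsq 2 (fun x => u x t) + 1) ^ 2 * Hsq 1 (fun x => pdt u x t) := by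
  refine ⟨20, by norm_num, fun T hT u ⟨hu, hnorm, hflow, _⟩ t ht => ?_⟩
  have hHsq : Hsq 2 (fun x => u x t) ≤ (Hsq 2 (fun x => u x t) + 1) ^ 2 := by
    nlinarith [Hsq_nonneg 2 fun x => u x t]
  have hHsq_pdt := Hsq_nonneg 1 fun x => pdt u x t
  have hL2sq := L2sq_nonneg fun x => pdt (pdt u) x t
  refine (utxx_estimate_schrodinger_flow_general (uniqueDiffOn_Icc hT t ht) ht
    (contDiff_infty.1 hu 3) hnorm hflow).trans ?_
  gcongr
  norm_num

end
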